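/- Let 0 < α < 1. Then there exists a constant C > 0, depending only on α, such that for every n ∈ ℤ² with n ≠ 0 and every t ≥ 0: ∑ ⟨n₁⟩^{−2(1−α)} ⟨n₂⟩^{−2(1−α)} e^{−2t⟨n⟩²} ∫₀^t e^{t₁(⟨n⟩² − ⟨n₁⟩² − ⟨n₂⟩²)} ∫₀^{t₁} e^{t₂(⟨n⟩² + ⟨n₁⟩² + ⟨n₂⟩²)} dt₂ dt₁ ≤ C ⟨n⟩^{−6 + 4α}, where the sum ranges over all pairs n₁, n₂ ∈ ℤ² with n₁ + n₂ = n, n₁ ≠ n₂ and n₁ ≠ −n₂. (This is the deterministic estimate underlying the positive part of Proposition 1.4(ii): the second-order stochastic object for the heat equation has spatial regularity 2 − 2α− for 0 < α < 1; note −6 + 4α = −2 − 2(2 − 2α).) -/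

import Mathlib

/-!
Write `A = ⟨n⟩²`, `B = ⟨m⟩²`, `C = ⟨n - m⟩²` with `m = n₁`, and `S = A + B + C`. The inner time
integral is at most `e^{t₁ S} / S`, which turns the outer integrand into at most `e^{2 t₁ A} / S`;
hence the whole time factor, including `e^{-2tA}`, is at most `1 / (2 A S)` (`time_bound`).

With `β = 2(1 - α) ∈ (0, 2)` and `N = ⟨n⟩` it remains to bound
`∑ ⟨m⟩^{-β} ⟨n - m⟩^{-β} / S` by `N^{-2β}`. Since the larger of `⟨m⟩, ⟨n - m⟩` is at least `N / 2`,
the summand is controlled by `F ⟨m⟩ + F ⟨n - m⟩` with `F x = x^{-β} max(N, x)^{-β - 2}`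
(`weight_le`), so only `∑ F ⟨m⟩` matters. Slicing `ℤ²` into sup-norm spheres of radius `k`, which
have at most `8 (k + 1)` points, leaves `∑ j^{1 - β} max(N, j)^{-β - 2}` over `j ≥ 1`. The part
`j ≤ N` is `≲ N^{-β - 2} N^{2 - β}` because `β < 2`, and the part `j > N` is `≲ N^{-2β}` because
`β > 0`; both are obtained by comparison with a telescoping sum (`radial_step`, `radial_sum`).
-/

/-- Japanese bracket `⟨n⟩ = (1 + |n|²)^{1/2}` for `n ∈ ℤ²`. -/
noncomputable def jb2 (n : ℤ × ℤ) : ℝ :=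
  Real.sqrt (1 + (n.1 : ℝ) ^ 2 + (n.2 : ℝ) ^ 2)

/-- The summand in the heat second-order variance estimate. -/
noncomputable def heatTerm (α : ℝ) (n n₁ : ℤ × ℤ) (t : ℝ) : ℝ :=
  jb2 n₁ ^ (-(2 * (1 - α))) * jb2 (n - n₁) ^ (-(2 * (1 - α)))
    * Real.exp (-2 * t * jb2 n ^ 2)
    * ∫ t₁ in (0 : ℝ)..t,
        Real.exp (t₁ * (jb2 n ^ 2 - jb2 n₁ ^ 2 - jb2 (n - n₁) ^ 2)) *
          ∫ t₂ in (0 : ℝ)..t₁,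
            Real.exp (t₂ * (jb2 n ^ 2 + jb2 n₁ ^ 2 + jb2 (n - n₁) ^ 2))

open Finset

/-! ### The time integrals -/

lemma integral_exp_mul_const {S : ℝ} (hS : 0 < S) (t : ℝ) :
    ∫ s in (0 : ℝ)..t, Real.exp (s * S) = (Real.exp (t * S) - 1) / S := by
  rw [intervalIntegral.integral_comp_mul_right (fun x => Real.exp x) hS.ne', integral_exp]
  simp [div_eq_inv_mul]

/-- The time factor of a summand, with `A, B, C` the three squared brackets. -/
lemma time_bound {A B C t : ℝ} (hA : 0 < A) (hB : 0 < B) (hC : 0 < C) (ht : 0 ≤ t) :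
    Real.exp (-2 * t * A) * ∫ t₁ in (0 : ℝ)..t, Real.exp (t₁ * (A - B - C)) *
      ∫ t₂ in (0 : ℝ)..t₁, Real.exp (t₂ * (A + B + C)) ≤ 1 / (2 * A * (A + B + C)) := by
  have hS : 0 < A + B + C := by positivity
  have h1 : (∫ t₁ in (0 : ℝ)..t, Real.exp (t₁ * (A - B - C)) *
      ∫ t₂ in (0 : ℝ)..t₁, Real.exp (t₂ * (A + B + C)))
      ≤ ∫ t₁ in (0 : ℝ)..t, Real.exp (t₁ * (2 * A)) / (A + B + C) := by
    simp_rw [integral_exp_mul_const hS]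
    apply intervalIntegral.integral_mono_on ht
    · exact Continuous.intervalIntegrable (by fun_prop) _ _
    · exact Continuous.intervalIntegrable (by fun_prop) _ _
    · intro x _
      rw [← mul_div_assoc]
      gcongr
      have : Real.exp (x * (2 * A)) =
          Real.exp (x * (A - B - C)) * Real.exp (x * (A + B + C)) := by
        rw [← Real.exp_add]; ring_nf
      nlinarith [Real.exp_pos (x * (A - B - C))]
  rw [intervalIntegral.integral_div, integral_exp_mul_const (by positivity)] at h1
  calc _ ≤ Real.exp (-2 * t * A) * ((Real.exp (t * (2 * A)) - 1) / (2 * A) / (A + B + C)) := by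
        gcongr
    _ ≤ Real.exp (-2 * t * A) * (Real.exp (t * (2 * A)) / (2 * A) / (A + B + C)) := by
        gcongr; linarith
    _ = Real.exp (-2 * t * A) * Real.exp (t * (2 * A)) / (2 * A * (A + B + C)) := by
        field_simp
    _ = _ := by
        rw [← Real.exp_add]; ring_nf; simp

/-! ### Power sums by telescoping -/

lemma rpow_step {p x : ℝ} (hp : 0 < p) (hx : 1 ≤ x) :
    min p 1 * x ^ (p - 1) ≤ x ^ p - (x - 1) ^ p := by
  have hx0 : 0 < x := by linarith
  have hu : 0 ≤ 1 - 1 / x := by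
    rw [sub_nonneg, div_le_one hx0]; exact hx
  have e1 : (x - 1) ^ p = x ^ p * (1 - 1 / x) ^ p := by
    rw [← Real.mul_rpow hx0.le hu]; congr 1; field_simp
  have e2 : x ^ (p - 1) = x ^ p * (1 / x) := by
    rw [Real.rpow_sub_one hx0.ne']; ring
  -- Bernoulli for `p ≤ 1`; for `p ≥ 1` the base `1 - 1/x` lies in `[0, 1]`.
  have key : (1 - 1 / x) ^ p ≤ 1 - min p 1 * (1 / x) := by
    rcases le_total p 1 with h | h
    · rw [min_eq_left h]
      have := rpow_one_add_le_one_add_mul_self (s := -(1 / x)) (p := p) (by linarith)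
        hp.le h
      calc _ = (1 + -(1 / x)) ^ p := by ring_nf
        _ ≤ _ := this
        _ = _ := by ring
    · rw [min_eq_right h]
      have := Real.rpow_le_rpow_of_exponent_ge' (x := 1 - 1 / x) hu
        (by have : 0 < 1 / x := by positivity
            linarith) zero_le_one h
      simpa using this
  rw [e1, e2]
  nlinarith [Real.rpow_pos_of_pos hx0 p]

lemma rpow_neg_step {q x : ℝ} (hq : 0 < q) (hx : 1 < x) :
    q * x ^ (-q - 1) ≤ (x - 1) ^ (-q) - x ^ (-q) := by
  have hx0 : 0 < x := by linarith
  have hu : 0 < 1 - 1 / x := by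
    rw [sub_pos, div_lt_one hx0]; exact hx
  have e1 : (x - 1) ^ (-q) = x ^ (-q) * (1 - 1 / x) ^ (-q) := by
    rw [← Real.mul_rpow hx0.le hu.le]; congr 1; field_simp
  have e2 : x ^ (-q - 1) = x ^ (-q) * (1 / x) := by
    rw [Real.rpow_sub_one hx0.ne']; ring
  have key : 1 + q * (1 / x) ≤ (1 - 1 / x) ^ (-q) := by
    rw [Real.rpow_def_of_pos hu]
    have h1 := Real.log_le_sub_one_of_pos hu
    have h2 := Real.add_one_le_exp (Real.log (1 - 1 / x) * -q)
    nlinarith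
  rw [e1, e2]
  nlinarith [Real.rpow_pos_of_pos hx0 (-q)]

/-- The radial profile `x^{-β} max(N, x)^{-β - 2}` with `β = 2(1 - α)`. -/
noncomputable def radialF (α N x : ℝ) : ℝ :=
  x ^ (-(2 * (1 - α))) * max N x ^ (-(2 * (1 - α)) - 2)

lemma radialF_nonneg {α N x : ℝ} (hx : 0 < x) : 0 ≤ radialF α N x := by
  have : 0 < max N x := lt_max_of_lt_right hx
  unfold radialF; positivity

/-- Constant in the radial sum. -/
noncomputable def radC (α : ℝ) : ℝ :=
  1 / min (2 * α) 1 + 2 ^ (4 * (1 - α) + 1) / (4 * (1 - α))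

/-- The potential `min(·, N)^{2α}` pays for the radii `j ≤ N`, and `(N + ·)^{-4(1-α)}` for the
radii `j > N`; the shift by `N` in the latter handles the radius just above `N`. -/
lemma radial_step {α N : ℝ} (hα0 : 0 < α) (hα : α < 1) (hN : 1 ≤ N) {j : ℝ} (hj : 1 ≤ j) :
    j * radialF α N j ≤
      1 / min (2 * α) 1 * N ^ (-(2 * (1 - α)) - 2)
          * (min j N ^ (2 * α) - min (j - 1) N ^ (2 * α))
      + 2 ^ (4 * (1 - α) + 1) / (4 * (1 - α))
          * ((N + j - 1) ^ (-(4 * (1 - α))) - (N + j) ^ (-(4 * (1 - α)))) := by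
  have hj0 : 0 < j := by linarith
  have hN0 : 0 < N := by linarith
  have hm : 0 < min (2 * α) 1 := by positivity
  have hq : 0 < 4 * (1 - α) := by linarith
  have hG : 0 ≤ min j N ^ (2 * α) - min (j - 1) N ^ (2 * α) := by
    rw [sub_nonneg]
    apply Real.rpow_le_rpow (le_min (by linarith) hN0.le) _ (by positivity)
    exact min_le_min_right _ (by linarith)
  have hH := rpow_neg_step hq (x := N + j) (by linarith)
  have hH0 : 0 ≤ (N + j) ^ (-(4 * (1 - α)) - 1) := by positivity
  unfold radialF
  rcases le_or_gt j N with h | h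
  · rw [max_eq_left h, min_eq_left h, min_eq_left (by linarith : j - 1 ≤ N)]
    have h1 := rpow_step (p := 2 * α) (by positivity) hj
    have e : j * j ^ (-(2 * (1 - α))) = j ^ (2 * α - 1) := by
      nth_rewrite 1 [← Real.rpow_one j]
      rw [← Real.rpow_add hj0]; ring_nf
    have h2 : j ^ (2 * α - 1) ≤ 1 / min (2 * α) 1 * (j ^ (2 * α) - (j - 1) ^ (2 * α)) := by
      rw [one_div, ← div_eq_inv_mul, le_div_iff₀ hm]; linarith
    have h3 : 0 ≤ 2 ^ (4 * (1 - α) + 1) / (4 * (1 - α))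
          * ((N + j - 1) ^ (-(4 * (1 - α))) - (N + j) ^ (-(4 * (1 - α)))) := by
      apply mul_nonneg (by positivity)
      nlinarith
    have hNp : 0 ≤ N ^ (-(2 * (1 - α)) - 2) := by positivity
    calc _ = j ^ (2 * α - 1) * N ^ (-(2 * (1 - α)) - 2) := by rw [← e]; ring
      _ ≤ _ := by nlinarith
  · rw [max_eq_right h.le]
    have e : j * (j ^ (-(2 * (1 - α))) * j ^ (-(2 * (1 - α)) - 2)) = j ^ (-(4 * (1 - α)) - 1) := by
      rw [← Real.rpow_add hj0]
      nth_rewrite 1 [← Real.rpow_one j]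
      rw [← Real.rpow_add hj0]; ring_nf
    have h1 : j ^ (-(4 * (1 - α)) - 1)
        ≤ 2 ^ (4 * (1 - α) + 1) * (N + j) ^ (-(4 * (1 - α)) - 1) := by
      calc _ = 2 ^ (4 * (1 - α) + 1) * (2 * j) ^ (-(4 * (1 - α)) - 1) := by
            rw [Real.mul_rpow (by norm_num) hj0.le, ← mul_assoc, ← Real.rpow_add (by norm_num)]
            ring_nf; simp
        _ ≤ _ := by
            gcongr 2 ^ (4 * (1 - α) + 1) * ?_
            exact Real.rpow_le_rpow_of_nonpos (by positivity) (by linarith) (by linarith)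
    have h2 : 2 ^ (4 * (1 - α) + 1) * (N + j) ^ (-(4 * (1 - α)) - 1)
        ≤ 2 ^ (4 * (1 - α) + 1) / (4 * (1 - α))
          * ((N + j - 1) ^ (-(4 * (1 - α))) - (N + j) ^ (-(4 * (1 - α)))) := by
      rw [div_mul_eq_mul_div, le_div_iff₀ hq, mul_assoc]
      gcongr
      linarith
    have h3 : 0 ≤ 1 / min (2 * α) 1 * N ^ (-(2 * (1 - α)) - 2)
          * (min j N ^ (2 * α) - min (j - 1) N ^ (2 * α)) := by positivity
    rw [e]; linarith

lemma radC_pos {α : ℝ} (hα0 : 0 < α) (hα : α < 1) : 0 < radC α := by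
  have hq : 0 < 4 * (1 - α) := by linarith
  unfold radC; positivity

lemma radial_sum {α N : ℝ} (hα0 : 0 < α) (hα : α < 1) (hN : 1 ≤ N) (K : ℕ) :
    ∑ k ∈ range K, ((k : ℝ) + 1) * radialF α N (k + 1) ≤ radC α * N ^ (-(4 * (1 - α))) := by
  have hN0 : 0 < N := by linarith
  have hq : 0 < 4 * (1 - α) := by linarith
  set G : ℕ → ℝ := fun k => min (k : ℝ) N ^ (2 * α) with hGdef
  set H : ℕ → ℝ := fun k => (N + k) ^ (-(4 * (1 - α))) with hHdef
  set c₁ := 1 / min (2 * α) 1 * N ^ (-(2 * (1 - α)) - 2) with hc₁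
  set c₂ : ℝ := 2 ^ (4 * (1 - α) + 1) / (4 * (1 - α)) with hc₂
  have hc₁0 : 0 ≤ c₁ := by positivity
  have hc₂0 : 0 ≤ c₂ := by positivity
  have step : ∀ k ∈ range K, ((k : ℝ) + 1) * radialF α N (k + 1) ≤
      c₁ * (G (k + 1) - G k) + c₂ * (H k - H (k + 1)) := by
    intro k _
    have := radial_step hα0 hα hN (j := (k : ℝ) + 1) (by linarith [Nat.cast_nonneg (α := ℝ) k])
    rw [← hc₁, ← hc₂, ← add_assoc, add_sub_cancel_right, add_sub_cancel_right] at this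
    simpa [hGdef, hHdef, ← add_assoc] using this
  refine (sum_le_sum step).trans ?_
  rw [sum_add_distrib, ← mul_sum, ← mul_sum, sum_range_sub, sum_range_sub']
  have hG0 : G 0 = 0 := by
    simp only [hGdef, Nat.cast_zero, min_eq_left hN0.le]
    exact Real.zero_rpow (by positivity)
  have hGK : G K ≤ N ^ (2 * α) :=
    Real.rpow_le_rpow (le_min (Nat.cast_nonneg _) hN0.le) (min_le_right _ _) (by positivity)
  have hH0 : H 0 = N ^ (-(4 * (1 - α))) := by simp [hHdef]
  have hHK : 0 ≤ H K := by positivity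
  have e : N ^ (-(2 * (1 - α)) - 2) * N ^ (2 * α) = N ^ (-(4 * (1 - α))) := by
    rw [← Real.rpow_add hN0]; ring_nf
  calc _ ≤ c₁ * N ^ (2 * α) + c₂ * N ^ (-(4 * (1 - α))) := by
        gcongr <;> linarith
    _ = _ := by rw [hc₁, mul_assoc, e, radC]; ring

/-! ### Lattice sums -/

lemma jb2_sq (n : ℤ × ℤ) : jb2 n ^ 2 = 1 + (n.1 : ℝ) ^ 2 + (n.2 : ℝ) ^ 2 :=
  Real.sq_sqrt (by positivity)

lemma one_le_jb2 (n : ℤ × ℤ) : 1 ≤ jb2 n := by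
  rw [jb2, Real.one_le_sqrt]; nlinarith [sq_nonneg (n.1 : ℝ), sq_nonneg (n.2 : ℝ)]

lemma jb2_pos (n : ℤ × ℤ) : 0 < jb2 n := by linarith [one_le_jb2 n]

/-- Sup norm on `ℤ²`, as a natural number. -/
def supAbs (m : ℤ × ℤ) : ℕ := max m.1.natAbs m.2.natAbs

lemma jb2_ge (m : ℤ × ℤ) : ((supAbs m : ℝ) + 1) / 2 ≤ jb2 m := by
  have h : (supAbs m : ℝ) ^ 2 ≤ (m.1 : ℝ) ^ 2 + (m.2 : ℝ) ^ 2 := by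
    unfold supAbs
    rcases max_choice m.1.natAbs m.2.natAbs with h | h <;> rw [h] <;>
      rw [Nat.cast_natAbs, Int.cast_abs, sq_abs] <;> nlinarith [sq_nonneg (m.1 : ℝ), sq_nonneg (m.2 : ℝ)]
  apply Real.le_sqrt_of_sq_le
  nlinarith [sq_nonneg ((supAbs m : ℝ) - 1)]

lemma radialF_le {α N x y : ℝ} (hα : α < 1) (hN : 1 ≤ N) (hy : 0 < y) (hxy : y / 2 ≤ x) :
    radialF α N x ≤ 2 ^ (4 * (1 - α) + 2) * radialF α N y := by
  have hM : max N y / 2 ≤ max N x := by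
    rcases max_cases N y with ⟨h, _⟩ | ⟨h, _⟩ <;> rw [h]
    · exact le_trans (by linarith) (le_max_left _ _)
    · exact hxy.trans (le_max_right _ _)
  have hMy : 0 < max N y := lt_max_of_lt_right hy
  have h2 : (2 : ℝ) ^ (4 * (1 - α) + 2) =
      (2⁻¹) ^ (-(2 * (1 - α))) * (2⁻¹) ^ (-(2 * (1 - α)) - 2) := by
    rw [Real.inv_rpow (by norm_num), Real.inv_rpow (by norm_num), ← Real.rpow_neg (by norm_num),
      ← Real.rpow_neg (by norm_num), ← Real.rpow_add (by norm_num)]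
    ring_nf
  calc radialF α N x ≤ (y / 2) ^ (-(2 * (1 - α))) * (max N y / 2) ^ (-(2 * (1 - α)) - 2) := by
        unfold radialF
        apply mul_le_mul
        · exact Real.rpow_le_rpow_of_nonpos (by positivity) hxy (by linarith)
        · exact Real.rpow_le_rpow_of_nonpos (by positivity) hM (by linarith)
        · positivity
        · positivity
    _ = _ := by
        rw [h2, radialF, div_eq_mul_inv, div_eq_mul_inv, Real.mul_rpow hy.le (by norm_num),
          Real.mul_rpow hMy.le (by norm_num)]
        ring

lemma card_filter_supAbs (s : Finset (ℤ × ℤ)) (k : ℕ) :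
    #{m ∈ s | supAbs m = k} ≤ 8 * (k + 1) := by
  have h1 : {m ∈ s | supAbs m = k} ⊆ box k := by
    intro m hm
    rw [Int.mem_box]
    exact (mem_filter.1 hm).2
  refine (card_le_card h1).trans ?_
  rcases eq_or_ne k 0 with rfl | hk
  · simp
  · rw [Int.card_box hk]; omega

/-- Constant in the lattice sum. -/
noncomputable def latC (α : ℝ) : ℝ := 8 * 2 ^ (4 * (1 - α) + 2) * radC α

lemma lattice_sum {α N : ℝ} (hα0 : 0 < α) (hα : α < 1) (hN : 1 ≤ N) (s : Finset (ℤ × ℤ)) :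
    ∑ m ∈ s, radialF α N (jb2 m) ≤ latC α * N ^ (-(4 * (1 - α))) := by
  have hmaps : ∀ m ∈ s, supAbs m ∈ range (s.sup supAbs + 1) := by
    intro m hm
    rw [mem_range, Nat.lt_succ_iff]
    exact le_sup (f := supAbs) hm
  rw [← sum_fiberwise_of_maps_to hmaps]
  calc _ ≤ ∑ k ∈ range (s.sup supAbs + 1),
        8 * 2 ^ (4 * (1 - α) + 2) * (((k : ℝ) + 1) * radialF α N (k + 1)) := by
        apply sum_le_sum
        intro k _
        have hF : 0 ≤ radialF α N (k + 1) := radialF_nonneg (by positivity)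
        have hc : ((#{m ∈ s | supAbs m = k} : ℕ) : ℝ) ≤ 8 * ((k : ℝ) + 1) := by
          exact_mod_cast card_filter_supAbs s k
        calc _ ≤ #{m ∈ s | supAbs m = k} • (2 ^ (4 * (1 - α) + 2) * radialF α N (k + 1)) := by
              apply sum_le_card_nsmul
              intro m hm
              have hk := (mem_filter.1 hm).2
              apply radialF_le hα hN (by positivity)
              rw [← hk]; exact jb2_ge m
          _ ≤ 8 * ((k : ℝ) + 1) * (2 ^ (4 * (1 - α) + 2) * radialF α N (k + 1)) := by
              rw [nsmul_eq_mul]; gcongr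
          _ = _ := by ring
    _ ≤ _ := by
        rw [← mul_sum, latC, mul_assoc _ (radC α)]
        gcongr
        exact radial_sum hα0 hα hN _

/-! ### The summand -/

lemma jb2_sq_le (n m : ℤ × ℤ) : jb2 n ^ 2 ≤ 2 * jb2 m ^ 2 + 2 * jb2 (n - m) ^ 2 := by
  simp only [jb2_sq, Prod.fst_sub, Prod.snd_sub, Int.cast_sub]
  nlinarith [sq_nonneg ((m.1 : ℝ) - (n.1 - m.1)), sq_nonneg ((m.2 : ℝ) - (n.2 - m.2))]

lemma weight_le_aux {α N x y : ℝ} (hα : α < 1) (hN : 1 ≤ N) (hx : 1 ≤ x)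
    (hxy : x ≤ y) (hNxy : N ^ 2 ≤ 2 * x ^ 2 + 2 * y ^ 2) :
    x ^ (-(2 * (1 - α))) * y ^ (-(2 * (1 - α))) / (N ^ 2 + x ^ 2 + y ^ 2)
      ≤ 2 ^ (2 * (1 - α)) * radialF α N x := by
  have hNy : N ≤ 2 * y := abs_le_of_sq_le_sq' (by nlinarith) (by linarith) |>.2
  have hM0 : 0 < max N x := by positivity
  have hM : max N x / 2 ≤ y := by
    rcases max_cases N x with ⟨h, _⟩ | ⟨h, _⟩ <;> rw [h] <;> linarith
  have hM2 : max N x ^ 2 ≤ N ^ 2 + x ^ 2 + y ^ 2 := by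
    rcases max_cases N x with ⟨h, _⟩ | ⟨h, _⟩ <;> rw [h] <;> nlinarith
  have h1 : y ^ (-(2 * (1 - α))) ≤ 2 ^ (2 * (1 - α)) * max N x ^ (-(2 * (1 - α))) := by
    calc _ ≤ (max N x / 2) ^ (-(2 * (1 - α))) :=
          Real.rpow_le_rpow_of_nonpos (by positivity) hM (by linarith)
      _ = _ := by
          rw [Real.div_rpow hM0.le (by norm_num), Real.rpow_neg (by norm_num : (0 : ℝ) ≤ 2)]
          field_simp
  calc _ ≤ x ^ (-(2 * (1 - α))) * (2 ^ (2 * (1 - α)) * max N x ^ (-(2 * (1 - α))))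
        / max N x ^ 2 := by gcongr
    _ = _ := by
        rw [radialF, Real.rpow_sub hM0, Real.rpow_two]; ring

lemma weight_le {α N x y : ℝ} (hα : α < 1) (hN : 1 ≤ N) (hx : 1 ≤ x) (hy : 1 ≤ y)
    (hNxy : N ^ 2 ≤ 2 * x ^ 2 + 2 * y ^ 2) :
    x ^ (-(2 * (1 - α))) * y ^ (-(2 * (1 - α))) / (N ^ 2 + x ^ 2 + y ^ 2)
      ≤ 2 ^ (2 * (1 - α)) * (radialF α N x + radialF α N y) := by
  have hFx : 0 ≤ radialF α N x := radialF_nonneg (by linarith)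
  have hFy : 0 ≤ radialF α N y := radialF_nonneg (by linarith)
  have h2 : (0 : ℝ) ≤ 2 ^ (2 * (1 - α)) := by positivity
  rcases le_total x y with h | h
  · have := weight_le_aux hα hN hx h hNxy
    nlinarith
  · have := weight_le_aux hα hN hy h (by linarith)
    rw [mul_comm (y ^ _), add_right_comm] at this
    nlinarith

lemma heatTerm_nonneg (α : ℝ) (n m : ℤ × ℤ) {t : ℝ} (ht : 0 ≤ t) : 0 ≤ heatTerm α n m t := by
  have h1 := jb2_pos m
  have h2 := jb2_pos (n - m)
  unfold heatTerm
  apply mul_nonneg (by positivity)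
  apply intervalIntegral.integral_nonneg ht
  intro u hu
  apply mul_nonneg (Real.exp_pos _).le
  exact intervalIntegral.integral_nonneg hu.1 fun _ _ => (Real.exp_pos _).le

lemma heatTerm_le {α : ℝ} (hα : α < 1) (n m : ℤ × ℤ) {t : ℝ} (ht : 0 ≤ t) :
    heatTerm α n m t ≤ 2 ^ (2 * (1 - α)) * jb2 n ^ (-2 : ℝ) *
      (radialF α (jb2 n) (jb2 m) + radialF α (jb2 n) (jb2 (n - m))) := by
  have h0 := jb2_pos n
  have h1 := jb2_pos m
  have h2 := jb2_pos (n - m)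
  have hT := time_bound (pow_pos h0 2) (pow_pos h1 2) (pow_pos h2 2) ht
  have hW := weight_le hα (one_le_jb2 n) (one_le_jb2 m) (one_le_jb2 (n - m)) (jb2_sq_le n m)
  rw [Real.rpow_neg h0.le, Real.rpow_two]
  unfold heatTerm
  rw [mul_assoc (_ * _)]
  calc _ ≤ jb2 m ^ (-(2 * (1 - α))) * jb2 (n - m) ^ (-(2 * (1 - α))) *
        (1 / (2 * jb2 n ^ 2 * (jb2 n ^ 2 + jb2 m ^ 2 + jb2 (n - m) ^ 2))) := by gcongr
    _ = (2 * jb2 n ^ 2)⁻¹ * (jb2 m ^ (-(2 * (1 - α))) * jb2 (n - m) ^ (-(2 * (1 - α))) /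
          (jb2 n ^ 2 + jb2 m ^ 2 + jb2 (n - m) ^ 2)) := by field_simp
    _ ≤ (jb2 n ^ 2)⁻¹ * (2 ^ (2 * (1 - α)) *
          (radialF α (jb2 n) (jb2 m) + radialF α (jb2 n) (jb2 (n - m)))) := by
        gcongr
        nlinarith [pow_pos h0 2]
    _ = _ := by ring

/-- Estimate underlying the positive part of Proposition 1.4(ii): the second-order heat
object has spatial regularity `2 - 2α-` for `0 < α < 1`. -/
theorem stmt5 (α : ℝ) (hα0 : 0 < α) (hα : α < 1) :
    ∃ C > 0, ∀ n : ℤ × ℤ, n ≠ 0 → ∀ t : ℝ, 0 ≤ t →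
      Summable (fun n₁ : ℤ × ℤ =>
        Set.indicator {m : ℤ × ℤ | m ≠ n - m ∧ m ≠ -(n - m)}
          (fun m => heatTerm α n m t) n₁) ∧
      ∑' n₁ : ℤ × ℤ,
          Set.indicator {m : ℤ × ℤ | m ≠ n - m ∧ m ≠ -(n - m)}
            (fun m => heatTerm α n m t) n₁
        ≤ C * jb2 n ^ (-6 + 4 * α) := by
  have hR := radC_pos hα0 hα
  refine ⟨2 ^ (2 * (1 - α)) * (2 * latC α), by unfold latC; positivity, ?_⟩
  intro n _ t ht
  have hN := one_le_jb2 n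
  have hN0 := jb2_pos n
  have hnn : ∀ m, 0 ≤ Set.indicator {m : ℤ × ℤ | m ≠ n - m ∧ m ≠ -(n - m)}
      (fun m => heatTerm α n m t) m :=
    Set.indicator_nonneg fun m _ => heatTerm_nonneg α n m ht
  have hbound : ∀ s : Finset (ℤ × ℤ),
      ∑ m ∈ s, Set.indicator {m : ℤ × ℤ | m ≠ n - m ∧ m ≠ -(n - m)}
        (fun m => heatTerm α n m t) m
        ≤ 2 ^ (2 * (1 - α)) * (2 * latC α) * jb2 n ^ (-6 + 4 * α) := by
    intro s
    have hs1 := lattice_sum hα0 hα hN s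
    have hs2 := lattice_sum hα0 hα hN (s.image (fun m => n - m))
    rw [sum_image (fun a _ b _ h => sub_right_injective h)] at hs2
    calc _ ≤ ∑ m ∈ s, 2 ^ (2 * (1 - α)) * jb2 n ^ (-2 : ℝ) *
          (radialF α (jb2 n) (jb2 m) + radialF α (jb2 n) (jb2 (n - m))) :=
          sum_le_sum fun m _ => (Set.indicator_le_self' (fun _ _ => heatTerm_nonneg α n _ ht)
            m).trans (heatTerm_le hα n m ht)
      _ ≤ 2 ^ (2 * (1 - α)) * jb2 n ^ (-2 : ℝ) *
          (latC α * jb2 n ^ (-(4 * (1 - α))) + latC α * jb2 n ^ (-(4 * (1 - α)))) := by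
          rw [← mul_sum, sum_add_distrib]
          gcongr
      _ = 2 ^ (2 * (1 - α)) * (2 * latC α) *
          (jb2 n ^ (-2 : ℝ) * jb2 n ^ (-(4 * (1 - α)))) := by ring
      _ = _ := by rw [← Real.rpow_add hN0]; ring_nf
  exact ⟨summable_of_sum_le hnn hbound, Real.tsum_le_of_sum_le hnn hbound⟩
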